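/- Transfer theorem (the inductive step used to construct a path dependent twin): let S and T be standard Borel spaces, let (W, Z) be a random element of S × T on a probability space (Ω, P), and let W' be a random element of S on a probability space (Ω', P') with the same law as W, together with a random variable U on (Ω', P') that is uniformly distributed on [0,1] and independent of W'. Then there exists a Borel measurable function g : S × ℝ → T such that the pair (W', g(W', U)) has the same joint law on S × T as (W, Z). -/

import Mathlib

open MeasureTheory ProbabilityTheory

/-- Projecting Lebesgue measure on `[0, 1]` to the unit interval gives its volume. -/
lemma map_projIcc_restrict_volume :
    (volume.restrict (Set.Icc (0 : ℝ) 1)).map (Set.projIcc (0 : ℝ) 1 zero_le_one)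
      = (volume : Measure unitInterval) := by
  have hproj : Measurable (Set.projIcc (0 : ℝ) 1 zero_le_one) := continuous_projIcc.measurable
  rw [← map_comap_subtype_coe measurableSet_Icc, Measure.map_map hproj measurable_subtype_coe]
  have hid : Set.projIcc (0 : ℝ) 1 zero_le_one ∘ ((↑) : Set.Icc (0 : ℝ) 1 → ℝ) = id :=
    funext (Set.projIcc_val zero_le_one)
  rw [hid, Measure.map_id]
  rfl

/-- If `f a` pushes `ν` forward to `κ a` for all `a`, then `(a, u) ↦ (a, f a u)` pushes `μ.prod ν`
forward to `μ ⊗ₘ κ`. -/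
lemma map_prod_eq_compProd {α β γ : Type*} [MeasurableSpace α] [MeasurableSpace β]
    [MeasurableSpace γ] (μ : Measure α) [SFinite μ] (ν : Measure β) [SFinite ν]
    (κ : Kernel α γ) [IsSFiniteKernel κ] {f : α → β → γ} (hf : Measurable (Function.uncurry f))
    (hκ : ∀ a, ν.map (f a) = κ a) :
    (μ.prod ν).map (fun p => (p.1, f p.1 p.2)) = μ ⊗ₘ κ := by
  have hpair : Measurable fun p : α × β => (p.1, f p.1 p.2) := measurable_fst.prodMk hf
  ext s hs
  rw [Measure.map_apply hpair hs, Measure.prod_apply (hpair hs), Measure.compProd_apply hs]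
  refine lintegral_congr fun a => ?_
  rw [← hκ a, Measure.map_apply hf.of_uncurry_left (measurable_prodMk_left hs)]
  rfl

open MeasureTheory ProbabilityTheory

/-- transfer theorem: let `S`, `T` be standard Borel spaces, `(W, Z)` a random
element of `S × T` on `(Ω, P)`, and `W'` a random element of `S` on `(Ω', P')` with the same
law as `W`, together with `U` uniform on `[0,1]` and independent of `W'`. Then there is a
Borel measurable `g : S × ℝ → T` such that `(W', g(W', U))` has the same joint law as
`(W, Z)`. -/
theorem transfer_theorem
    {Ω Ω' S T : Type*} [MeasurableSpace Ω] [MeasurableSpace Ω']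
    [MeasurableSpace S] [StandardBorelSpace S] [MeasurableSpace T] [StandardBorelSpace T]
    (P : Measure Ω) [IsProbabilityMeasure P] (P' : Measure Ω') [IsProbabilityMeasure P']
    (W : Ω → S) (Z : Ω → T) (hW : Measurable W) (hZ : Measurable Z)
    (W' : Ω' → S) (U : Ω' → ℝ) (hW' : Measurable W') (hU : Measurable U)
    (hWlaw : P'.map W' = P.map W)
    (hUlaw : P'.map U = volume.restrict (Set.Icc (0 : ℝ) 1))
    (hIndep : IndepFun W' U P') :
    ∃ g : S → ℝ → T, Measurable (fun p : S × ℝ => g p.1 p.2) ∧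
      P'.map (fun ω => (W' ω, g (W' ω) (U ω))) = P.map (fun ω => (W ω, Z ω)) := by
  have : Nonempty Ω := nonempty_of_isProbabilityMeasure P
  have : Nonempty T := this.map Z
  have : IsProbabilityMeasure (P.map W) := Measure.isProbabilityMeasure_map hW.aemeasurable
  obtain ⟨f, hf, hfκ⟩ :=
    (condDistrib Z W P).exists_measurable_map_eq_unitInterval
  have hproj : Measurable (Set.projIcc (0 : ℝ) 1 zero_le_one) := continuous_projIcc.measurable
  let g : S → ℝ → T := fun s u => f s (Set.projIcc 0 1 zero_le_one u)
  have hg : Measurable (Function.uncurry g) :=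
    hf.comp (measurable_fst.prodMk (hproj.comp measurable_snd))
  have hgκ (s : S) : (volume.restrict (Set.Icc (0 : ℝ) 1)).map (g s) = condDistrib Z W P s := by
    rw [← hfκ s, ← map_projIcc_restrict_volume,
      Measure.map_map hf.of_uncurry_left hproj]
    rfl
  refine ⟨g, hg, ?_⟩
  have hjoint : P'.map (fun ω => (W' ω, U ω))
      = (P.map W).prod (volume.restrict (Set.Icc (0 : ℝ) 1)) := by
    rw [(indepFun_iff_map_prod_eq_prod_map_map hW'.aemeasurable hU.aemeasurable).mp hIndep,
      hWlaw, hUlaw]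
  have hpair : Measurable fun p : S × ℝ => (p.1, g p.1 p.2) := measurable_fst.prodMk hg
  rw [← compProd_map_condDistrib hZ.aemeasurable,
    ← map_prod_eq_compProd (P.map W) _ (condDistrib Z W P) hg hgκ, ← hjoint,
    Measure.map_map hpair (hW'.prodMk hU)]
  rfl
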